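/- Let v ≥ 0 and σ > 0, let X and Y be independent real Gaussian random variables with mean 0 and variance σ², and set K = v²/(2σ²) and Ω = v² + 2σ². Then the Rician random variable α = √((v + X)² + Y²) has mean E[α] = (1/2) √(π Ω /(K+1)) · e^{-K/2} [ (1+K) I₀(K/2) + K I₁(K/2) ], where I₀(z) = (1/π) ∫₀^π e^{z cos θ} dθ and I₁(z) = (1/π) ∫₀^π e^{z cos θ} cos θ dθ are the modified Bessel functions of the first kind of orders 0 and 1. -/

import Mathlib

open MeasureTheory ProbabilityTheory Real Set

/-- Modified Bessel function of the first kind of order 0: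
`I₀(z) = (1/π) ∫₀^π e^(z cos θ) dθ`. -/
noncomputable def besselI0 (z : ℝ) : ℝ :=
  (1 / π) * ∫ θ in (0 : ℝ)..π, Real.exp (z * Real.cos θ)

/-- Modified Bessel function of the first kind of order 1:
`I₁(z) = (1/π) ∫₀^π e^(z cos θ) cos θ dθ`. -/
noncomputable def besselI1 (z : ℝ) : ℝ :=
  (1 / π) * ∫ θ in (0 : ℝ)..π, Real.exp (z * Real.cos θ) * Real.cos θ

/-!
Since `√π * √z = ∫ x, z * exp (-x² z)`, the mean of `√Z` is, up to the factor `√π`, the integral of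
`E[Z exp (-τ Z)]` at `τ = x²`. For `Z = X² + Y²` this expectation is explicit, because the weight
`exp (-τ y²)` turns a Gaussian law into a multiple of another one. The substitution
`√(2s) x = tan (θ / 2)`, with `s` the common variance, leaves an integral of `exp (K / 2 * cos θ)`
against a trigonometric polynomial, which an integration by parts reduces to `I₀` and `I₁`.
-/

open scoped NNReal

section SqrtIntegral

lemma integrable_mul_exp_neg_sq_mul {z : ℝ} (hz : 0 ≤ z) :
    Integrable fun x : ℝ ↦ z * exp (-x ^ 2 * z) := by
  obtain rfl | hz := hz.eq_or_lt
  · simp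
  · simpa only [neg_mul, mul_comm z] using (integrable_exp_neg_mul_sq hz).const_mul z

-- For `z < 0` the integral diverges, and both sides are `0` by the junk value conventions.
lemma integral_mul_exp_neg_sq_mul (z : ℝ) :
    ∫ x : ℝ, z * exp (-x ^ 2 * z) = √π * √z := by
  calc ∫ x : ℝ, z * exp (-x ^ 2 * z) = z * √(π / z) := by
        rw [← integral_gaussian, ← integral_const_mul]
        simp only [neg_mul, mul_comm z]
    _ = √π * √z := by
        rw [sqrt_div pi_nonneg, mul_div_left_comm, div_sqrt]

lemma sqrt_pi_mul_integral_sqrt {α : Type*} [MeasurableSpace α] {μ : Measure α} [SFinite μ]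
    {Z : α → ℝ} (hZ : ∀ a, 0 ≤ Z a) (h_int : Integrable (fun a ↦ √(Z a)) μ) :
    √π * ∫ a, √(Z a) ∂μ = ∫ x : ℝ, ∫ a, Z a * exp (-x ^ 2 * Z a) ∂μ := by
  have hZm : AEStronglyMeasurable Z μ :=
    (h_int.1.pow 2).congr (ae_of_all _ fun a ↦ sq_sqrt (hZ a))
  have hprod : Integrable (fun p : α × ℝ ↦ Z p.1 * exp (-p.2 ^ 2 * Z p.1)) (μ.prod volume) := by
    have hexp : AEStronglyMeasurable (fun p : α × ℝ ↦ exp (-p.2 ^ 2 * Z p.1)) (μ.prod volume) :=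
      continuous_exp.comp_aestronglyMeasurable
        ((by fun_prop : Continuous fun x : ℝ ↦ -x ^ 2).aestronglyMeasurable.comp_snd.mul
          hZm.comp_fst)
    refine (integrable_prod_iff (hZm.comp_fst.mul hexp)).mpr
      ⟨ae_of_all _ fun a ↦ integrable_mul_exp_neg_sq_mul (hZ a), ?_⟩
    simpa only [Pi.mul_apply, norm_eq_abs, abs_mul, abs_exp, abs_of_nonneg (hZ _),
      integral_mul_exp_neg_sq_mul] using h_int.const_mul (√π)
  rw [← integral_integral_swap hprod, ← integral_const_mul]
  simp only [integral_mul_exp_neg_sq_mul]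

lemma integrable_sqrt_sq_add_sq {α : Type*} [MeasurableSpace α] {μ : Measure α} {f g : α → ℝ}
    (hf : Integrable f μ) (hg : Integrable g μ) :
    Integrable (fun a ↦ √(f a ^ 2 + g a ^ 2)) μ := by
  have hmeas : AEStronglyMeasurable (fun a ↦ √(f a ^ 2 + g a ^ 2)) μ :=
    continuous_sqrt.comp_aestronglyMeasurable ((hf.1.pow 2).add (hg.1.pow 2))
  refine (hf.abs.add hg.abs).mono' hmeas (ae_of_all _ fun a ↦ ?_)
  rw [norm_of_nonneg (sqrt_nonneg _), Pi.add_apply, sqrt_le_left (by positivity), add_sq,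
    sq_abs, sq_abs]
  have : 0 ≤ 2 * |f a| * |g a| := by positivity
  linarith

end SqrtIntegral

section GaussianTilt

variable {s : ℝ≥0} {τ : ℝ}

lemma exp_neg_mul_sq_mul_gaussianPDFReal (m : ℝ) (hs : s ≠ 0) (hτ : 0 < 1 + 2 * s * τ) (y : ℝ) :
    exp (-τ * y ^ 2) * gaussianPDFReal m s y =
      exp (-τ * m ^ 2 / (1 + 2 * s * τ)) / √(1 + 2 * s * τ) *
        gaussianPDFReal (m / (1 + 2 * s * τ)) (s / (1 + 2 * s * τ).toNNReal) y := by
  have hexp : exp (-τ * y ^ 2) * exp (-(y - m) ^ 2 / (2 * s)) =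
      exp (-τ * m ^ 2 / (1 + 2 * s * τ)) *
        exp (-(y - m / (1 + 2 * s * τ)) ^ 2 / (2 * (s / (1 + 2 * s * τ)))) := by
    rw [← exp_add, ← exp_add]
    congr 1
    set D := 1 + 2 * s * τ with hD
    have hτD : τ = (D - 1) / (2 * s) := by rw [hD]; field_simp; ring
    rw [hτD]
    field_simp
    ring
  have hsqrt : √(2 * π * (s / (1 + 2 * s * τ))) = √(2 * π * s) / √(1 + 2 * s * τ) := by
    rw [← mul_div_assoc, sqrt_div (by positivity)]
  rw [gaussianPDFReal, gaussianPDFReal, NNReal.coe_div, coe_toNNReal _ hτ.le, hsqrt,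
    mul_left_comm, hexp]
  field_simp

lemma withDensity_exp_neg_mul_sq_gaussianReal (m : ℝ) (hτ : 0 < 1 + 2 * s * τ) :
    (gaussianReal m s).withDensity (fun y ↦ .ofReal (exp (-τ * y ^ 2))) =
      ENNReal.ofReal (exp (-τ * m ^ 2 / (1 + 2 * s * τ)) / √(1 + 2 * s * τ)) •
        gaussianReal (m / (1 + 2 * s * τ)) (s / (1 + 2 * s * τ).toNNReal) := by
  obtain rfl | hs := eq_or_ne s 0
  · simp [gaussianReal_zero_var, dirac_withDensity]
  have hs' : s / (1 + 2 * s * τ).toNNReal ≠ 0 := div_ne_zero hs (toNNReal_pos.mpr hτ).ne'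
  rw [gaussianReal_of_var_ne_zero _ hs, gaussianReal_of_var_ne_zero _ hs',
    ← withDensity_mul _ (by fun_prop) (by fun_prop), ← withDensity_smul _ (by fun_prop)]
  congr 1 with y
  simp only [Pi.mul_apply, Pi.smul_apply, smul_eq_mul, gaussianPDF]
  rw [mul_comm, ← ENNReal.ofReal_mul (exp_nonneg _), ← ENNReal.ofReal_mul (by positivity),
    exp_neg_mul_sq_mul_gaussianPDFReal m hs hτ]

variable {E : Type*} [NormedAddCommGroup E] [NormedSpace ℝ E]

lemma integral_exp_neg_mul_sq_smul_gaussianReal (m : ℝ) (hτ : 0 < 1 + 2 * s * τ) (f : ℝ → E) :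
    ∫ y, exp (-τ * y ^ 2) • f y ∂gaussianReal m s =
      (exp (-τ * m ^ 2 / (1 + 2 * s * τ)) / √(1 + 2 * s * τ)) •
        ∫ y, f y ∂gaussianReal (m / (1 + 2 * s * τ)) (s / (1 + 2 * s * τ).toNNReal) := by
  have h := integral_withDensity_eq_integral_toReal_smul (μ := gaussianReal m s)
    (f := fun y ↦ .ofReal (exp (-τ * y ^ 2))) (by fun_prop) (by simp) f
  simp only [ENNReal.toReal_ofReal (exp_nonneg _)] at h
  rw [← h, withDensity_exp_neg_mul_sq_gaussianReal m hτ, integral_smul_measure,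
    ENNReal.toReal_ofReal (by positivity)]

lemma integrable_exp_neg_mul_sq_smul_gaussianReal {m : ℝ} (hτ : 0 < 1 + 2 * s * τ) {f : ℝ → E}
    (hf : Integrable f (gaussianReal (m / (1 + 2 * s * τ)) (s / (1 + 2 * s * τ).toNNReal))) :
    Integrable (fun y ↦ exp (-τ * y ^ 2) • f y) (gaussianReal m s) := by
  have h := integrable_withDensity_iff_integrable_smul' (μ := gaussianReal m s)
    (f := fun y ↦ .ofReal (exp (-τ * y ^ 2))) (by fun_prop) (by simp) (g := f)
  simp only [ENNReal.toReal_ofReal (exp_nonneg _)] at h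
  rw [← h, withDensity_exp_neg_mul_sq_gaussianReal m hτ]
  exact hf.smul_measure ENNReal.ofReal_ne_top

end GaussianTilt

section GaussianMoments

lemma integrable_sq_gaussianReal (m : ℝ) (s : ℝ≥0) :
    Integrable (fun y ↦ y ^ 2) (gaussianReal m s) :=
  (memLp_id_gaussianReal 2).integrable_sq

lemma integral_sq_gaussianReal (m : ℝ) (s : ℝ≥0) :
    ∫ y, y ^ 2 ∂gaussianReal m s = m ^ 2 + s := by
  have h := variance_eq_sub (memLp_id_gaussianReal (μ := m) (v := s) 2)
  simp only [variance_id_gaussianReal, Pi.pow_apply, id_eq, integral_id_gaussianReal] at h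
  linarith

variable {s : ℝ≥0} {τ : ℝ}

lemma integrable_exp_neg_mul_sq_gaussianReal (m : ℝ) (hτ : 0 < 1 + 2 * s * τ) :
    Integrable (fun y ↦ exp (-τ * y ^ 2)) (gaussianReal m s) := by
  simpa using integrable_exp_neg_mul_sq_smul_gaussianReal hτ
    (integrable_const (1 : ℝ) (μ := gaussianReal (m / _) _))

lemma integrable_exp_neg_mul_sq_mul_sq_gaussianReal (m : ℝ) (hτ : 0 < 1 + 2 * s * τ) :
    Integrable (fun y ↦ exp (-τ * y ^ 2) * y ^ 2) (gaussianReal m s) :=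
  integrable_exp_neg_mul_sq_smul_gaussianReal hτ (integrable_sq_gaussianReal _ _)

lemma integral_exp_neg_mul_sq_gaussianReal (m : ℝ) (hτ : 0 < 1 + 2 * s * τ) :
    ∫ y, exp (-τ * y ^ 2) ∂gaussianReal m s =
      exp (-τ * m ^ 2 / (1 + 2 * s * τ)) / √(1 + 2 * s * τ) := by
  simpa using integral_exp_neg_mul_sq_smul_gaussianReal m hτ fun _ ↦ (1 : ℝ)

lemma integral_exp_neg_mul_sq_mul_sq_gaussianReal (m : ℝ) (hτ : 0 < 1 + 2 * s * τ) :
    ∫ y, exp (-τ * y ^ 2) * y ^ 2 ∂gaussianReal m s =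
      exp (-τ * m ^ 2 / (1 + 2 * s * τ)) / √(1 + 2 * s * τ) *
        (m ^ 2 / (1 + 2 * s * τ) ^ 2 + s / (1 + 2 * s * τ)) := by
  have h := integral_exp_neg_mul_sq_smul_gaussianReal m hτ fun y : ℝ ↦ y ^ 2
  rwa [integral_sq_gaussianReal, NNReal.coe_div, coe_toNNReal _ hτ.le, div_pow] at h

lemma integral_sq_add_sq_mul_exp_gaussianReal_prod (a b : ℝ) (hτ : 0 < 1 + 2 * s * τ) :
    ∫ p : ℝ × ℝ, (p.1 ^ 2 + p.2 ^ 2) * exp (-τ * (p.1 ^ 2 + p.2 ^ 2))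
      ∂(gaussianReal a s).prod (gaussianReal b s) =
      exp (-τ * (a ^ 2 + b ^ 2) / (1 + 2 * s * τ)) *
        ((a ^ 2 + b ^ 2) / (1 + 2 * s * τ) ^ 3 + 2 * s / (1 + 2 * s * τ) ^ 2) := by
  have hsplit : ∀ p : ℝ × ℝ, (p.1 ^ 2 + p.2 ^ 2) * exp (-τ * (p.1 ^ 2 + p.2 ^ 2)) =
      exp (-τ * p.1 ^ 2) * p.1 ^ 2 * exp (-τ * p.2 ^ 2) +
        exp (-τ * p.1 ^ 2) * (exp (-τ * p.2 ^ 2) * p.2 ^ 2) := fun p ↦ by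
    rw [mul_add (-τ), exp_add]
    ring
  simp only [hsplit]
  rw [integral_add
      ((integrable_exp_neg_mul_sq_mul_sq_gaussianReal a hτ).mul_prod
        (integrable_exp_neg_mul_sq_gaussianReal b hτ))
      ((integrable_exp_neg_mul_sq_gaussianReal a hτ).mul_prod
        (integrable_exp_neg_mul_sq_mul_sq_gaussianReal b hτ)),
    integral_prod_mul (fun y ↦ exp (-τ * y ^ 2) * y ^ 2) (fun y ↦ exp (-τ * y ^ 2)),
    integral_prod_mul (fun y ↦ exp (-τ * y ^ 2)) (fun y ↦ exp (-τ * y ^ 2) * y ^ 2),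
    integral_exp_neg_mul_sq_mul_sq_gaussianReal a hτ,
    integral_exp_neg_mul_sq_mul_sq_gaussianReal b hτ,
    integral_exp_neg_mul_sq_gaussianReal a hτ, integral_exp_neg_mul_sq_gaussianReal b hτ,
    mul_add (-τ), add_div, exp_add]
  set D := 1 + 2 * s * τ
  field_simp
  rw [sq_sqrt hτ.le]
  field_simp
  ring

end GaussianMoments

section TrigonometricIntegrals

lemma integral_eq_intervalIntegral_comp_tan {E : Type*} [NormedAddCommGroup E] [NormedSpace ℝ E]
    (f : ℝ → E) :
    ∫ x, f x = ∫ φ in (-(π / 2))..(π / 2), (1 / cos φ ^ 2) • f (tan φ) := by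
  have hderiv : ∀ φ ∈ Ioo (-(π / 2)) (π / 2),
      HasDerivWithinAt tan (1 / cos φ ^ 2) (Ioo (-(π / 2)) (π / 2)) φ := fun φ hφ ↦
    (hasDerivAt_tan (cos_pos_of_mem_Ioo hφ).ne').hasDerivWithinAt
  rw [← setIntegral_univ, ← image_tan_Ioo,
    integral_image_eq_integral_abs_deriv_smul measurableSet_Ioo hderiv injOn_tan,
    intervalIntegral.integral_of_le (by linarith [pi_pos]), integral_Ioc_eq_integral_Ioo]
  simp only [abs_div, abs_one, abs_sq]

lemma intervalIntegral_neg_self_of_even {E : Type*} [NormedAddCommGroup E] [NormedSpace ℝ E]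
    {f : ℝ → E} (hf : Function.Even f) (c : ℝ) (h_int : IntervalIntegrable f volume 0 c) :
    ∫ x in (-c)..c, f x = (2 : ℝ) • ∫ x in 0..c, f x := by
  have hneg : ∫ x in (-c)..0, f x = ∫ x in 0..c, f x := by
    simpa only [hf _, neg_zero] using
      (intervalIntegral.integral_comp_neg (a := 0) (b := c) f).symm
  have h_int' : IntervalIntegrable f volume (-c) 0 := by
    simpa only [hf _, neg_zero] using ((IntervalIntegrable.iff_comp_neg).mp h_int).symm
  rw [← intervalIntegral.integral_add_adjacent_intervals h_int' h_int, hneg, two_smul]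

lemma integral_exp_mul_cos (z : ℝ) : ∫ θ in 0..π, exp (z * cos θ) = π * besselI0 z := by
  rw [besselI0, ← mul_assoc, mul_one_div_cancel pi_ne_zero, one_mul]

lemma integral_exp_mul_cos_mul_cos (z : ℝ) :
    ∫ θ in 0..π, exp (z * cos θ) * cos θ = π * besselI1 z := by
  rw [besselI1, ← mul_assoc, mul_one_div_cancel pi_ne_zero, one_mul]

lemma mul_integral_exp_mul_cos_mul_sin_sq (z : ℝ) :
    z * ∫ θ in 0..π, exp (z * cos θ) * sin θ ^ 2 = π * besselI1 z := by
  have hderiv : ∀ θ ∈ uIcc 0 π, HasDerivAt (fun θ ↦ sin θ * exp (z * cos θ))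
      (exp (z * cos θ) * cos θ - z * (exp (z * cos θ) * sin θ ^ 2)) θ := fun θ _ ↦
    ((hasDerivAt_sin θ).mul ((hasDerivAt_cos θ).const_mul z).exp).congr_deriv (by ring)
  have h := intervalIntegral.integral_eq_sub_of_hasDerivAt hderiv
    (Continuous.intervalIntegrable (by fun_prop) _ _)
  rw [intervalIntegral.integral_sub (Continuous.intervalIntegrable (by fun_prop) _ _)
    (Continuous.intervalIntegrable (by fun_prop) _ _), intervalIntegral.integral_const_mul,
    sin_pi, sin_zero, zero_mul, zero_mul, sub_zero, sub_eq_zero] at h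
  rw [← h, integral_exp_mul_cos_mul_cos]

lemma exp_sin_half_sq_mul_cos_half_sq_add (K θ : ℝ) :
    exp (-K * sin (θ / 2) ^ 2) * (cos (θ / 2) ^ 2 + K * cos (θ / 2) ^ 4) =
      exp (-K / 2) *
        ((1 + K) / 2 * (exp (K / 2 * cos θ) + exp (K / 2 * cos θ) * cos θ) -
          1 / 2 * (K / 2 * (exp (K / 2 * cos θ) * sin θ ^ 2))) := by
  have hcos : cos (θ / 2) ^ 2 = (1 + cos θ) / 2 := by
    rw [cos_sq, mul_div_cancel₀ θ two_ne_zero]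
    ring
  have hsin : sin (θ / 2) ^ 2 = (1 - cos θ) / 2 := by
    rw [sin_sq, hcos]
    ring
  have hcos4 : cos (θ / 2) ^ 4 = ((1 + cos θ) / 2) ^ 2 := by
    rw [← hcos, ← pow_mul]
  have hexp : exp (-K * ((1 - cos θ) / 2)) = exp (-K / 2) * exp (K / 2 * cos θ) := by
    rw [← exp_add]
    ring_nf
  rw [hsin, hcos4, hcos, hexp, sin_sq]
  ring

lemma integral_exp_sin_sq_mul_eq_bessel (K : ℝ) :
    ∫ φ in (-(π / 2))..(π / 2), exp (-K * sin φ ^ 2) * (cos φ ^ 2 + K * cos φ ^ 4) =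
      π / 2 * exp (-K / 2) * ((1 + K) * besselI0 (K / 2) + K * besselI1 (K / 2)) := by
  set g : ℝ → ℝ := fun φ ↦ exp (-K * sin φ ^ 2) * (cos φ ^ 2 + K * cos φ ^ 4) with hg
  have hg_even : Function.Even g := fun φ ↦ by simp [hg]
  have hhalve : ∫ φ in (-(π / 2))..(π / 2), g φ = ∫ θ in 0..π, g (θ / 2) := by
    rw [intervalIntegral_neg_self_of_even hg_even _
        (Continuous.intervalIntegrable (by fun_prop) _ _),
      intervalIntegral.integral_comp_div g two_ne_zero, zero_div]
  rw [hhalve]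
  simp only [hg, exp_sin_half_sq_mul_cos_half_sq_add]
  rw [intervalIntegral.integral_const_mul,
    intervalIntegral.integral_sub (Continuous.intervalIntegrable (by fun_prop) _ _)
      (Continuous.intervalIntegrable (by fun_prop) _ _),
    intervalIntegral.integral_const_mul, intervalIntegral.integral_const_mul,
    intervalIntegral.integral_const_mul,
    intervalIntegral.integral_add (Continuous.intervalIntegrable (by fun_prop) _ _)
      (Continuous.intervalIntegrable (by fun_prop) _ _),
    integral_exp_mul_cos, integral_exp_mul_cos_mul_cos, mul_integral_exp_mul_cos_mul_sin_sq]
  ring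

lemma integral_exp_sq_div_eq_bessel (K : ℝ) :
    ∫ y : ℝ, exp (-K * y ^ 2 / (1 + y ^ 2)) * (K / (1 + y ^ 2) ^ 3 + 1 / (1 + y ^ 2) ^ 2) =
      π / 2 * exp (-K / 2) * ((1 + K) * besselI0 (K / 2) + K * besselI1 (K / 2)) := by
  rw [integral_eq_intervalIntegral_comp_tan, ← integral_exp_sin_sq_mul_eq_bessel,
    intervalIntegral.integral_of_le (by linarith [pi_pos]),
    intervalIntegral.integral_of_le (by linarith [pi_pos]), integral_Ioc_eq_integral_Ioo,
    integral_Ioc_eq_integral_Ioo]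
  refine setIntegral_congr_fun measurableSet_Ioo fun φ hφ ↦ ?_
  have hcos : cos φ ≠ 0 := (cos_pos_of_mem_Ioo hφ).ne'
  have hsec : 1 + tan φ ^ 2 = 1 / cos φ ^ 2 := by
    rw [← inv_one_add_tan_sq hcos, one_div, inv_inv]
  have hsin : -K * tan φ ^ 2 / (1 / cos φ ^ 2) = -K * sin φ ^ 2 := by
    rw [tan_eq_sin_div_cos]
    field_simp
  simp only [hsec, hsin, smul_eq_mul]
  field_simp
  ring

lemma integral_exp_neg_sq_mul_div_eq_bessel {c : ℝ} (hc : 0 < c) (K : ℝ) :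
    ∫ x : ℝ, exp (-x ^ 2 * (c * K) / (1 + c * x ^ 2)) *
        (c * K / (1 + c * x ^ 2) ^ 3 + c / (1 + c * x ^ 2) ^ 2) =
      √c * (π / 2) * exp (-K / 2) * ((1 + K) * besselI0 (K / 2) + K * besselI1 (K / 2)) := by
  set g : ℝ → ℝ := fun y ↦
    exp (-K * y ^ 2 / (1 + y ^ 2)) * (K / (1 + y ^ 2) ^ 3 + 1 / (1 + y ^ 2) ^ 2) with hg
  calc ∫ x : ℝ, exp (-x ^ 2 * (c * K) / (1 + c * x ^ 2)) *
        (c * K / (1 + c * x ^ 2) ^ 3 + c / (1 + c * x ^ 2) ^ 2)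
    _ = ∫ x, c * g (√c * x) := by
        congr 1 with x
        simp only [hg, mul_pow, sq_sqrt hc.le]
        ring_nf
    _ = c / √c * ∫ y, g y := by
        rw [integral_const_mul, Measure.integral_comp_mul_left, abs_of_nonneg (by positivity),
          smul_eq_mul, ← mul_assoc, div_eq_mul_inv]
    _ = _ := by
        rw [integral_exp_sq_div_eq_bessel, div_sqrt]
        ring

end TrigonometricIntegrals

lemma integral_sqrt_sq_add_sq_gaussianReal_prod (a b : ℝ) {s : ℝ≥0} (hs : s ≠ 0) {K : ℝ}
    (hK : K = (a ^ 2 + b ^ 2) / (2 * s)) :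
    ∫ p : ℝ × ℝ, √(p.1 ^ 2 + p.2 ^ 2) ∂(gaussianReal a s).prod (gaussianReal b s) =
      √(π * s / 2) * exp (-K / 2) *
        ((1 + K) * besselI0 (K / 2) + K * besselI1 (K / 2)) := by
  have hsq : a ^ 2 + b ^ 2 = 2 * s * K := by rw [hK]; field_simp
  have hid (m : ℝ) : Integrable (fun y ↦ y) (gaussianReal m s) :=
    memLp_one_iff_integrable.mp (memLp_id_gaussianReal 1)
  have h_int : Integrable (fun p : ℝ × ℝ ↦ √(p.1 ^ 2 + p.2 ^ 2))
      ((gaussianReal a s).prod (gaussianReal b s)) :=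
    integrable_sqrt_sq_add_sq ((hid a).comp_fst _) ((hid b).comp_snd _)
  have hinner (x : ℝ) : ∫ p : ℝ × ℝ, (p.1 ^ 2 + p.2 ^ 2) * exp (-x ^ 2 * (p.1 ^ 2 + p.2 ^ 2))
      ∂(gaussianReal a s).prod (gaussianReal b s) =
      exp (-x ^ 2 * (2 * s * K) / (1 + 2 * s * x ^ 2)) *
        (2 * s * K / (1 + 2 * s * x ^ 2) ^ 3 + 2 * s / (1 + 2 * s * x ^ 2) ^ 2) := by
    rw [integral_sq_add_sq_mul_exp_gaussianReal_prod a b (by positivity), hsq]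
  have hconst : √π * √(π * s / 2) = √(2 * s) * (π / 2) := by
    rw [← sqrt_mul pi_nonneg, show π * (π * s / 2) = 2 * s * (π / 2) ^ 2 by ring,
      sqrt_mul (by positivity), sqrt_sq (by positivity)]
  refine mul_left_cancel₀ (sqrt_ne_zero'.mpr pi_pos) ?_
  rw [sqrt_pi_mul_integral_sqrt (fun p ↦ by positivity) h_int]
  simp only [hinner]
  rw [integral_exp_neg_sq_mul_div_eq_bessel (by positivity), ← hconst]
  ring

theorem rician_mean_general
    {Ω : Type*} [MeasurableSpace Ω] (P : Measure Ω) (a b σ K Om : ℝ) (hσ : σ ≠ 0)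
    (hK : K = (a ^ 2 + b ^ 2) / (2 * σ ^ 2)) (hOm : Om = a ^ 2 + b ^ 2 + 2 * σ ^ 2)
    (X Y : Ω → ℝ) (hX : HasLaw X (gaussianReal 0 (σ ^ 2).toNNReal) P)
    (hY : HasLaw Y (gaussianReal 0 (σ ^ 2).toNNReal) P) (hXY : IndepFun X Y P) :
    ∫ ω, √((a + X ω) ^ 2 + (b + Y ω) ^ 2) ∂P =
      1 / 2 * √(π * Om / (K + 1)) * exp (-K / 2) *
        ((1 + K) * besselI0 (K / 2) + K * besselI1 (K / 2)) := by
  have hσ2 : 0 < σ ^ 2 := by positivity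
  have : IsProbabilityMeasure P := hX.isProbabilityMeasure
  have hlaw : HasLaw (fun ω ↦ (a + X ω, b + Y ω))
      ((gaussianReal (0 + a) (σ ^ 2).toNNReal).prod (gaussianReal (0 + b) (σ ^ 2).toNNReal)) P :=
    (hXY.comp (measurable_const_add a) (measurable_const_add b)).hasLaw_prod
      (gaussianReal_const_add hX a) (gaussianReal_const_add hY b)
  have hscale : √(π * σ ^ 2 / 2) = 1 / 2 * √(π * Om / (K + 1)) := by
    have hK1 : 0 < K + 1 := by rw [hK]; positivity
    have hOmK : Om = 2 * σ ^ 2 * (K + 1) := by rw [hOm, hK]; field_simp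
    have hfour : π * Om / (K + 1) = 2 ^ 2 * (π * σ ^ 2 / 2) := by
      rw [hOmK]
      field_simp
    rw [hfour, sqrt_mul (by positivity), sqrt_sq zero_le_two, one_div,
      inv_mul_cancel_left₀ two_ne_zero]
  have hK' : K = (a ^ 2 + b ^ 2) / (2 * ((σ ^ 2).toNNReal : ℝ)) := by
    rwa [coe_toNNReal _ hσ2.le]
  calc ∫ ω, √((a + X ω) ^ 2 + (b + Y ω) ^ 2) ∂P
    _ = ∫ p : ℝ × ℝ, √(p.1 ^ 2 + p.2 ^ 2)
          ∂(gaussianReal a (σ ^ 2).toNNReal).prod (gaussianReal b (σ ^ 2).toNNReal) := by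
        rw [zero_add, zero_add] at hlaw
        exact hlaw.integral_comp (f := fun p ↦ √(p.1 ^ 2 + p.2 ^ 2)) (by fun_prop)
    _ = _ := by
        rw [integral_sqrt_sq_add_sq_gaussianReal_prod a b (toNNReal_pos.mpr hσ2).ne' hK',
          coe_toNNReal _ hσ2.le, hscale]

/-- For `v ≥ 0`, `σ > 0`, independent Gaussians `X, Y` with mean `0`
and variance `σ²`, with `K = v²/(2σ²)` and `Ω = v² + 2σ²`, the Rician random variable
`α = √((v + X)² + Y²)` has mean
`E[α] = (1/2) √(π Ω /(K+1)) e^(-K/2) [(1+K) I₀(K/2) + K I₁(K/2)]`. -/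
theorem rician_mean
    {Ω : Type*} [MeasurableSpace Ω] (P : Measure Ω) [IsProbabilityMeasure P]
    (v σ K Om : ℝ) (hv : 0 ≤ v) (hσ : 0 < σ)
    (hK : K = v ^ 2 / (2 * σ ^ 2)) (hOm : Om = v ^ 2 + 2 * σ ^ 2)
    (X Y : Ω → ℝ) (hXmeas : Measurable X) (hYmeas : Measurable Y)
    (hX : Measure.map X P = gaussianReal 0 (Real.toNNReal (σ ^ 2)))
    (hY : Measure.map Y P = gaussianReal 0 (Real.toNNReal (σ ^ 2)))
    (hXY : IndepFun X Y P) :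
    (∫ ω, Real.sqrt ((v + X ω) ^ 2 + (Y ω) ^ 2) ∂P) =
      (1 / 2) * Real.sqrt (π * Om / (K + 1)) * Real.exp (-K / 2) *
        ((1 + K) * besselI0 (K / 2) + K * besselI1 (K / 2)) := by
  simpa using rician_mean_general P v 0 σ K Om hσ.ne' (by simpa using hK) (by simpa using hOm) X Y
    ⟨hXmeas.aemeasurable, hX⟩ ⟨hYmeas.aemeasurable, hY⟩ hXY
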